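/- Let k be an algebraically closed field and D a k-linear triangulated category with finite-dimensional Hom spaces. Let H0 and H be finite hearts of bounded t-structures on D with H0[1] ≤ H ≤ H0[N-1] for an integer N ≥ 2, and let S be a rigid simple object of H. Then, with homology taken with respect to H0: (1) the simple backward tilt H^♭_S satisfies H0[1] ≤ H^♭_S ≤ H0[N-1] if and only if H^1(S) = 0; (2) the simple forward tilt H^♯_S satisfies H0[1] ≤ H^♯_S ≤ H0[N-1] if and only if H^{N-1}(S) = 0. -/

import Mathlib

open CategoryTheory Category Limits Pretriangulated ZeroObject

universe v u

namespace Paper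

variable (C : Type u) [Category.{v} C] [HasZeroObject C] [HasShift C ℤ]
  [Preadditive C] [∀ n : ℤ, (shiftFunctor C n).Additive] [Pretriangulated C]

/-- The right perpendicular of a set of objects: objects receiving no nonzero
morphism from the set. -/
def perp (P : Set C) : Set C := {G | ∀ F ∈ P, ∀ f : F ⟶ G, f = 0}

/-- A bounded t-structure on a (pre)triangulated category, given by its aisle `P`. -/
structure TStr where
  P : Set C
  /-- `P` is closed under direct summands (hence under isomorphism). -/
  summand : ∀ (X Y : C) (i : Y ⟶ X) (r : X ⟶ Y), i ≫ r = 𝟙 Y → X ∈ P → Y ∈ P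
  /-- `P[1] ⊆ P`. -/
  shift_mem : ∀ X ∈ P, X⟦(1 : ℤ)⟧ ∈ P
  /-- Every object fits in a triangle `F → E → G → F[1]` with `F ∈ P` and `G ∈ P^⊥`. -/
  exists_triangle : ∀ E : C, ∃ (F G : C) (f : F ⟶ E) (g : E ⟶ G) (h : G ⟶ F⟦(1 : ℤ)⟧),
    F ∈ P ∧ G ∈ perp C P ∧ Triangle.mk f g h ∈ distTriang C
  /-- `M[k] ∈ P` for `k ≫ 0`. -/
  bounded_above : ∀ M : C, ∃ a : ℤ, ∀ j : ℤ, a ≤ j → M⟦j⟧ ∈ P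
  /-- `M[k] ∈ P^⊥` for `k ≪ 0`. -/
  bounded_below : ∀ M : C, ∃ b : ℤ, ∀ j : ℤ, j ≤ b → M⟦j⟧ ∈ perp C P

/-- The heart `H = P^⊥[1] ∩ P` of a bounded t-structure. -/
def heart (T : TStr C) : Set C := {X | X ∈ T.P ∧ X⟦(-1 : ℤ)⟧ ∈ perp C T.P}

/-- The shift `S[m]` of a set of objects. -/
def shiftSet (S : Set C) (m : ℤ) : Set C := {X | X⟦(-m : ℤ)⟧ ∈ S}

/-- An object `P` is a projective of a heart if `Hom(P, M[k]) = 0` for all `k ≠ 0`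
and all `M` in the heart. -/
def IsProjOf (T : TStr C) (P : C) : Prop :=
  ∀ (k : ℤ), k ≠ 0 → ∀ M ∈ heart C T, ∀ f : P ⟶ M⟦k⟧, f = 0

/-- A filtration of an object `M` by triangles with factors in the heart, shifted by a
strictly decreasing sequence of degrees: the canonical filtration associated to a bounded
t-structure. -/
structure HeartFiltration (T : TStr C) (M : C) where
  n : ℕ
  obj : ℕ → C
  deg : ℕ → ℤ
  factor : ℕ → C
  zero : IsZero (obj 0)
  top : obj n ≅ M
  mem : ∀ i, 1 ≤ i → i ≤ n → factor i ∈ heart C T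
  strict : ∀ i j, 1 ≤ i → i < j → j ≤ n → deg j < deg i
  tri : ∀ i, 1 ≤ i → i ≤ n →
    ∃ (f : obj (i - 1) ⟶ obj i) (g : obj i ⟶ (factor i)⟦deg i⟧)
      (h : (factor i)⟦deg i⟧ ⟶ (obj (i - 1))⟦(1 : ℤ)⟧),
      Triangle.mk f g h ∈ distTriang C

variable {C}

open Classical in
/-- The homology `H^k(M)` of `M` with respect to the heart, read off from a
filtration: the factor in degree `k` if there is one, and `0` otherwise. -/
noncomputable def HeartFiltration.homologyAt {T : TStr C} {M : C}
    (F : HeartFiltration C T M) (k : ℤ) : C :=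
  if h : ∃ i, 1 ≤ i ∧ i ≤ F.n ∧ F.deg i = k then F.factor h.choose else 0

variable (C)

/-- A torsion pair `⟨F, T⟩` in the heart of a bounded t-structure: `Hom(T, F) = 0` and
every object of the heart is an extension (triangle) of an `F`-object by a `T`-object. -/
structure TorsionPairIn (T : TStr C) where
  free : Set C
  tor : Set C
  free_sub : free ⊆ heart C T
  tor_sub : tor ⊆ heart C T
  hom_zero : ∀ X ∈ tor, ∀ Y ∈ free, ∀ f : X ⟶ Y, f = 0
  exists_ses : ∀ E ∈ heart C T, ∃ (A B : C) (f : A ⟶ E) (g : E ⟶ B) (h : B ⟶ A⟦(1 : ℤ)⟧),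
    A ∈ tor ∧ B ∈ free ∧ Triangle.mk f g h ∈ distTriang C

/-- The forward tilt `H^♯` of the heart at a torsion pair `⟨free, tor⟩`:
objects `E` with `H^1(E) ∈ F`, `H^0(E) ∈ T` and `H^i(E) = 0` otherwise. -/
def tiltSharpSet (T : TStr C) (free tor : Set C) : Set C :=
  {E | ∀ (F : HeartFiltration C T E) (i : ℕ), 1 ≤ i → i ≤ F.n →
    IsZero (F.factor i) ∨ (F.deg i = 1 ∧ F.factor i ∈ free) ∨
      (F.deg i = 0 ∧ F.factor i ∈ tor)}

/-- The backward tilt `H^♭` of the heart at a torsion pair `⟨free, tor⟩`: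
objects `E` with `H^0(E) ∈ F`, `H^{-1}(E) ∈ T` and `H^i(E) = 0` otherwise. -/
def tiltFlatSet (T : TStr C) (free tor : Set C) : Set C :=
  {E | ∀ (F : HeartFiltration C T E) (i : ℕ), 1 ≤ i → i ≤ F.n →
    IsZero (F.factor i) ∨ (F.deg i = 0 ∧ F.factor i ∈ free) ∨
      (F.deg i = -1 ∧ F.factor i ∈ tor)}

/-- Simple objects of a heart (or of any full subcategory closed under the abelian
structure): nonzero objects which are not the middle term of a nontrivial short exact
sequence (triangle) in the heart. -/
def IsSimpleIn (H : Set C) (X : C) : Prop :=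
  X ∈ H ∧ ¬ IsZero X ∧ ∀ (A B : C) (f : A ⟶ X) (g : X ⟶ B) (h : B ⟶ A⟦(1 : ℤ)⟧),
    A ∈ H → B ∈ H → Triangle.mk f g h ∈ (distTriang C) → IsZero A ∨ IsZero B

/-- A heart is finite if it has finitely many simples up to isomorphism and every object
is a finite iterated extension of simple objects. -/
def FiniteHeart (T : TStr C) : Prop :=
  (∃ (n : ℕ) (S : Fin n → C), (∀ i, IsSimpleIn C (heart C T) (S i)) ∧
    ∀ X, IsSimpleIn C (heart C T) X → ∃ i, Nonempty (X ≅ S i)) ∧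
  ∀ M ∈ heart C T, ∃ (m : ℕ) (obj : ℕ → C), IsZero (obj 0) ∧ Nonempty (obj m ≅ M) ∧
    ∀ i < m, ∃ (s : C) (f : obj i ⟶ obj (i + 1)) (g : obj (i + 1) ⟶ s)
      (h : s ⟶ (obj i)⟦(1 : ℤ)⟧),
      IsSimpleIn C (heart C T) s ∧ Triangle.mk f g h ∈ distTriang C

section Biproducts

variable [HasFiniteBiproducts C]

/-- Finite direct sums of copies of an object `S`. -/
def addObj (S : C) : Set C := {M | ∃ n : ℕ, Nonempty (M ≅ ⨁ (fun _ : Fin n => S))}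

/-- The simple forward tilt `H^♯_S` of the heart at a rigid simple `S`: the forward tilt
at the torsion pair whose free part consists of finite direct sums of copies of `S`. -/
def simpleSharpSet (T : TStr C) (S : C) : Set C :=
  tiltSharpSet C T (addObj C S) {M | M ∈ heart C T ∧ ∀ f : M ⟶ S, f = 0}

/-- The simple backward tilt `H^♭_S` of the heart at a rigid simple `S`: the backward
tilt at the torsion pair whose torsion part consists of finite direct sums of copies
of `S`. -/
def simpleFlatSet (T : TStr C) (S : C) : Set C :=
  tiltFlatSet C T {M | M ∈ heart C T ∧ ∀ f : S ⟶ M, f = 0} (addObj C S)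

end Biproducts

/-! A bounded t-structure is in particular a t-structure in Mathlib's sense, and an inclusion
between the aisles (or coaisles) of two bounded t-structures can be tested on one heart, because
every object is an iterated extension of shifts of heart objects along its heart filtration. For
the backward tilt, the coaisle only gets smaller, so the bound by `H0[N-1]` persists, while the
bound by `H0[1]` has to be tested on the shifted torsion part: it says that the copies of `S` lie
one step deeper in the aisle of `H0`. As the homology of `S` is already concentrated in degrees
`1, …, N-1`, this is the vanishing of `H^1(S)`. The forward tilt is dual. -/

section

variable {C}

section TStructure

variable (t : Triangulated.TStructure C)

instance (n : ℤ) : (t.le n).IsTriangulatedClosed₂ :=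
  .mk' fun Δ hΔ h₁ h₃ ↦ (t.isLE₂ Δ hΔ n ⟨h₁⟩ ⟨h₃⟩).le

instance (n : ℤ) : (t.ge n).IsTriangulatedClosed₂ :=
  .mk' fun Δ hΔ h₁ h₃ ↦ (t.isGE₂ Δ hΔ n ⟨h₁⟩ ⟨h₃⟩).ge

instance (n : ℤ) : (t.le n).ContainsZero :=
  ⟨0, isZero_zero C, t.le_of_isLE 0 n⟩

instance (n : ℤ) : (t.ge n).ContainsZero :=
  ⟨0, isZero_zero C, t.ge_of_isGE 0 n⟩

lemma isLE_obj₁_and_isLE_obj₃ {X₁ X₂ X₃ : C} {f : X₁ ⟶ X₂} {g : X₂ ⟶ X₃}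
    {δ : X₃ ⟶ X₁⟦(1 : ℤ)⟧} (hT : Triangle.mk f g δ ∈ distTriang C) (d n : ℤ)
    [t.IsLE X₁ (d - 1)] [t.IsGE X₃ d] [h₂ : t.IsLE X₂ n] :
    t.IsLE X₁ n ∧ t.IsLE X₃ n := by
  have : t.IsLE (X₁⟦(1 : ℤ)⟧) (d - 2) := t.isLE_shift _ (d - 1) 1 (d - 2)
  rcases le_or_gt d n with hdn | hnd
  · exact ⟨t.isLE_of_le _ (d - 1) n, t.isLE₂ _ (rot_of_distTriang _ hT) n h₂
      (t.isLE_of_le (X₁⟦(1 : ℤ)⟧) (d - 2) n)⟩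
  · have : t.IsLE X₃ (d - 1) := t.isLE₂ _ (rot_of_distTriang _ hT) (d - 1)
      (t.isLE_of_le X₂ n (d - 1)) (t.isLE_of_le (X₁⟦(1 : ℤ)⟧) (d - 2) (d - 1))
    have hzero : IsZero X₃ := t.isZero _ (d - 1) d
    exact ⟨t.isLE₂ _ (inv_rot_of_distTriang _ hT) n
      (t.isLE_of_isZero ((shiftFunctor C (-1 : ℤ)).map_isZero hzero) n) h₂,
      t.isLE_of_isZero hzero n⟩

lemma isGE_obj₁_and_isGE_obj₃ {X₁ X₂ X₃ : C} {f : X₁ ⟶ X₂} {g : X₂ ⟶ X₃}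
    {δ : X₃ ⟶ X₁⟦(1 : ℤ)⟧} (hT : Triangle.mk f g δ ∈ distTriang C) (d n : ℤ)
    [t.IsLE X₁ (d - 1)] [t.IsGE X₃ d] [h₂ : t.IsGE X₂ n] :
    t.IsGE X₁ n ∧ t.IsGE X₃ n := by
  have : t.IsGE (X₃⟦(-1 : ℤ)⟧) (d + 1) := t.isGE_shift _ d (-1) (d + 1)
  rcases lt_or_ge n d with hnd | hdn
  · exact ⟨t.isGE₂ _ (inv_rot_of_distTriang _ hT) n
      (t.isGE_of_ge (X₃⟦(-1 : ℤ)⟧) n (d + 1)) h₂, t.isGE_of_ge _ n d⟩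
  · have : t.IsGE X₁ d := t.isGE₂ _ (inv_rot_of_distTriang _ hT) d
      (t.isGE_of_ge (X₃⟦(-1 : ℤ)⟧) d (d + 1)) (t.isGE_of_ge X₂ d n)
    have hzero : IsZero X₁ := t.isZero _ (d - 1) d
    exact ⟨t.isGE_of_isZero hzero n, t.isGE₂ _ (rot_of_distTriang _ hT) n h₂
      (t.isGE_of_isZero ((shiftFunctor C (1 : ℤ)).map_isZero hzero) n)⟩

lemma le_le_iff_ge_le (t t' : Triangulated.TStructure C) (a b : ℤ) :
    t.le a ≤ t'.le b ↔ t'.ge b ≤ t.ge a := by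
  constructor
  · intro h X (hX : t'.ge b X)
    have : t'.IsGE X b := ⟨hX⟩
    have : t'.IsGE (X⟦(-1 : ℤ)⟧) (b + 1) := t'.isGE_shift X b (-1) (b + 1)
    have : t.IsGE (X⟦(-1 : ℤ)⟧) (a + 1) := by
      refine (t.isGE_iff_orthogonal a (a + 1) rfl _).2 fun Y f hY ↦ ?_
      have : t'.IsLE Y b := ⟨h _ hY.le⟩
      exact t'.zero f b (b + 1)
    exact (t.isGE_of_shift X a (-1) (a + 1)).ge
  · intro h X (hX : t.le a X)
    have : t.IsLE X a := ⟨hX⟩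
    have : t.IsLE (X⟦(1 : ℤ)⟧) (a - 1) := t.isLE_shift X a 1 (a - 1)
    have : t'.IsLE (X⟦(1 : ℤ)⟧) (b - 1) := by
      refine (t'.isLE_iff_orthogonal (b - 1) b (by lia) _).2 fun Y f hY ↦ ?_
      have : t.IsGE Y a := ⟨h _ hY.ge⟩
      exact t.zero f (a - 1) a
    exact (t'.isLE_of_shift X b 1 (b - 1)).le

end TStructure

namespace TStr

variable (T : TStr C)

lemma mem_of_iso {X Y : C} (e : X ≅ Y) (hX : X ∈ T.P) : Y ∈ T.P :=
  T.summand X Y e.inv e.hom e.inv_hom_id hX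

lemma mem_perp_of_iso {X Y : C} (e : X ≅ Y) (hX : X ∈ perp C T.P) : Y ∈ perp C T.P :=
  fun F hF f ↦ by rw [← cancel_mono e.inv, hX F hF (f ≫ e.inv), zero_comp]

lemma mem_perp_of_shift_one_mem_perp {X : C} (hX : X⟦(1 : ℤ)⟧ ∈ perp C T.P) :
    X ∈ perp C T.P := fun F hF f ↦
  (shiftFunctor C (1 : ℤ)).map_injective <| by
    rw [hX _ (T.shift_mem F hF) (f⟦(1 : ℤ)⟧'), Functor.map_zero]

/-- The t-structure in Mathlib's sense with aisle `P`. Mathlib indexes t-structures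
cohomologically, so that `le n` is `P[-n]` and `ge n` is `P^⊥[1 - n]`. -/
def toTStructure : Triangulated.TStructure C where
  le n X := X⟦n⟧ ∈ T.P
  ge n X := X⟦n - 1⟧ ∈ perp C T.P
  le_isClosedUnderIsomorphisms n := ⟨fun e ↦ T.mem_of_iso ((shiftFunctor C n).mapIso e)⟩
  ge_isClosedUnderIsomorphisms n := ⟨fun e ↦ T.mem_perp_of_iso ((shiftFunctor C (n - 1)).mapIso e)⟩
  le_shift n a n' h X := T.mem_of_iso ((shiftFunctorAdd' C a n' n h).app X)
  ge_shift n a n' h X := T.mem_perp_of_iso ((shiftFunctorAdd' C a (n' - 1) (n - 1) (by lia)).app X)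
  zero' X Y f hX hY :=
    T.mem_perp_of_iso ((shiftFunctorZero' C (1 - 1 : ℤ) (by lia)).app Y) hY X
      (T.mem_of_iso (shiftZero ℤ X) hX) f
  le_zero_le X hX :=
    T.mem_of_iso ((shiftFunctorAdd' C 0 1 1 (by lia)).app X).symm (T.shift_mem _ hX)
  ge_one_le X hX :=
    T.mem_perp_of_shift_one_mem_perp <|
      T.mem_perp_of_iso ((shiftFunctorAdd' C (0 - 1 : ℤ) 1 (1 - 1) (by lia)).app X) hX
  exists_triangle_zero_one A := by
    obtain ⟨X, Y, f, g, h, hX, hY, hT⟩ := T.exists_triangle A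
    exact ⟨X, Y, T.mem_of_iso (shiftZero ℤ X).symm hX,
      T.mem_perp_of_iso ((shiftFunctorZero' C (1 - 1 : ℤ) (by lia)).app Y).symm hY, f, g, h, hT⟩

lemma exists_isLE (X : C) : ∃ n : ℤ, T.toTStructure.IsLE X n := by
  obtain ⟨n, hn⟩ := T.bounded_above X
  exact ⟨n, ⟨hn n le_rfl⟩⟩

lemma exists_isGE (X : C) : ∃ n : ℤ, T.toTStructure.IsGE X n := by
  obtain ⟨n, hn⟩ := T.bounded_below X
  exact ⟨n, ⟨hn (n - 1) (by lia)⟩⟩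

lemma mem_iff_isLE {X : C} : X ∈ T.P ↔ T.toTStructure.IsLE X 0 :=
  ⟨fun h ↦ ⟨T.mem_of_iso (shiftZero ℤ X).symm h⟩, fun h ↦ T.mem_of_iso (shiftZero ℤ X) h.le⟩

lemma mem_heart_iff {X : C} :
    X ∈ heart C T ↔ T.toTStructure.IsLE X 0 ∧ T.toTStructure.IsGE X 0 :=
  and_congr T.mem_iff_isLE ⟨fun h ↦ ⟨h⟩, fun h ↦ h.ge⟩

lemma subset_shiftSet_iff (T₀ : TStr C) (m : ℤ) :
    T.P ⊆ shiftSet C T₀.P m ↔ T.toTStructure.le 0 ≤ T₀.toTStructure.le (-m) :=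
  ⟨fun h _ hX ↦ h (T.mem_iff_isLE.2 ⟨hX⟩), fun h _ hX ↦ h _ (T.mem_iff_isLE.1 hX).le⟩

lemma shiftSet_subset_iff (T₀ : TStr C) (m : ℤ) :
    shiftSet C T₀.P m ⊆ T.P ↔ T.toTStructure.ge 0 ≤ T₀.toTStructure.ge (-m) := by
  rw [← le_le_iff_ge_le]
  exact ⟨fun h _ hX ↦ (T.mem_iff_isLE.1 (h hX)).le, fun h _ hX ↦ T.mem_iff_isLE.2 ⟨h _ hX⟩⟩

end TStr

namespace HeartFiltration

variable {T : TStr C} {M : C}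

section

variable (F : HeartFiltration C T M)

lemma exists_triangle {i : ℕ} (hin : i + 1 ≤ F.n) :
    ∃ (f : F.obj i ⟶ F.obj (i + 1)) (g : F.obj (i + 1) ⟶ (F.factor (i + 1))⟦F.deg (i + 1)⟧)
      (δ : (F.factor (i + 1))⟦F.deg (i + 1)⟧ ⟶ (F.obj i)⟦(1 : ℤ)⟧),
      Triangle.mk f g δ ∈ distTriang C :=
  F.tri (i + 1) (by lia) hin

lemma isLE_shift_factor {i : ℕ} (hi : 1 ≤ i) (hin : i ≤ F.n) :
    T.toTStructure.IsLE ((F.factor i)⟦F.deg i⟧) (-F.deg i) :=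
  have := (T.mem_heart_iff.1 (F.mem i hi hin)).1
  T.toTStructure.isLE_shift _ 0 _ _

lemma isGE_shift_factor {i : ℕ} (hi : 1 ≤ i) (hin : i ≤ F.n) :
    T.toTStructure.IsGE ((F.factor i)⟦F.deg i⟧) (-F.deg i) :=
  have := (T.mem_heart_iff.1 (F.mem i hi hin)).2
  T.toTStructure.isGE_shift _ 0 _ _

section

variable (Q : ObjectProperty C) [Q.IsTriangulatedClosed₂] [Q.ContainsZero]
  [Q.IsClosedUnderIsomorphisms]

lemma prop_obj {i : ℕ} (hin : i ≤ F.n)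
    (h : ∀ j, 1 ≤ j → j ≤ i → ¬ IsZero (F.factor j) → Q ((F.factor j)⟦F.deg j⟧)) :
    Q (F.obj i) := by
  induction i with
  | zero => exact Q.prop_of_isZero F.zero
  | succ i ih =>
    obtain ⟨f, g, δ, hT⟩ := F.exists_triangle hin
    refine Q.ext_of_isTriangulatedClosed₂ _ hT
      (ih (by lia) fun j h₁ hji ↦ h j h₁ (by lia)) ?_
    by_cases hz : IsZero (F.factor (i + 1))
    · exact Q.prop_of_isZero ((shiftFunctor C _).map_isZero hz)
    · exact h (i + 1) (by lia) le_rfl hz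

lemma prop_of_factor
    (h : ∀ i, 1 ≤ i → i ≤ F.n → ¬ IsZero (F.factor i) → Q ((F.factor i)⟦F.deg i⟧)) : Q M :=
  Q.prop_of_iso F.top (F.prop_obj Q le_rfl h)

end

lemma isLE_obj_pred {i : ℕ} (hin : i + 1 ≤ F.n) :
    T.toTStructure.IsLE (F.obj i) (-F.deg (i + 1) - 1) where
  le := F.prop_obj _ (by lia) fun j hj hji _ ↦
    have := F.isLE_shift_factor hj (by lia)
    have hdeg := F.strict j (i + 1) hj (by lia) hin
    T.toTStructure.le_monotone (by lia) _ this.le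

lemma isLE_obj_and_isLE_shift_factor {n : ℤ} {i : ℕ} (hin : i + 1 ≤ F.n)
    [T.toTStructure.IsLE (F.obj (i + 1)) n] :
    T.toTStructure.IsLE (F.obj i) n ∧
      T.toTStructure.IsLE ((F.factor (i + 1))⟦F.deg (i + 1)⟧) n := by
  obtain ⟨f, g, δ, hT⟩ := F.exists_triangle hin
  have := F.isLE_obj_pred hin
  have := F.isGE_shift_factor (i := i + 1) (by lia) hin
  exact isLE_obj₁_and_isLE_obj₃ T.toTStructure hT (-F.deg (i + 1)) n

lemma isGE_obj_and_isGE_shift_factor {n : ℤ} {i : ℕ} (hin : i + 1 ≤ F.n)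
    [T.toTStructure.IsGE (F.obj (i + 1)) n] :
    T.toTStructure.IsGE (F.obj i) n ∧
      T.toTStructure.IsGE ((F.factor (i + 1))⟦F.deg (i + 1)⟧) n := by
  obtain ⟨f, g, δ, hT⟩ := F.exists_triangle hin
  have := F.isLE_obj_pred hin
  have := F.isGE_shift_factor (i := i + 1) (by lia) hin
  exact isGE_obj₁_and_isGE_obj₃ T.toTStructure hT (-F.deg (i + 1)) n

lemma isLE_obj {n : ℤ} [T.toTStructure.IsLE M n] {i : ℕ} (hin : i ≤ F.n) :
    T.toTStructure.IsLE (F.obj i) n := by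
  induction hin using Nat.decreasingInduction with
  | self => exact T.toTStructure.isLE_of_iso F.top.symm n
  | of_succ i hi _ => exact (F.isLE_obj_and_isLE_shift_factor hi).1

lemma isGE_obj {n : ℤ} [T.toTStructure.IsGE M n] {i : ℕ} (hin : i ≤ F.n) :
    T.toTStructure.IsGE (F.obj i) n := by
  induction hin using Nat.decreasingInduction with
  | self => exact T.toTStructure.isGE_of_iso F.top.symm n
  | of_succ i hi _ => exact (F.isGE_obj_and_isGE_shift_factor hi).1

lemma isLE_iff (n : ℤ) :
    T.toTStructure.IsLE M n ↔
      ∀ i, 1 ≤ i → i ≤ F.n → F.deg i < -n → IsZero (F.factor i) := by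
  refine ⟨fun _ i hi hin hdeg ↦ ?_, fun h ↦ ⟨F.prop_of_factor _ fun i hi hin hz ↦ ?_⟩⟩
  · obtain ⟨i, rfl⟩ := Nat.exists_eq_add_of_le' hi
    have := F.isLE_obj (n := n) hin
    have := (F.isLE_obj_and_isLE_shift_factor (n := n) hin).2
    have := F.isGE_shift_factor hi hin
    exact IsZero.of_full_of_faithful_of_isZero (shiftFunctor C (F.deg (i + 1))) _
      (T.toTStructure.isZero _ n (-F.deg (i + 1)))
  · have := F.isLE_shift_factor hi hin
    have hdeg : -n ≤ F.deg i := not_lt.1 fun hlt ↦ hz (h i hi hin hlt)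
    exact T.toTStructure.le_monotone (by lia) _ this.le

lemma isGE_iff (n : ℤ) :
    T.toTStructure.IsGE M n ↔
      ∀ i, 1 ≤ i → i ≤ F.n → -n < F.deg i → IsZero (F.factor i) := by
  refine ⟨fun _ i hi hin hdeg ↦ ?_, fun h ↦ ⟨F.prop_of_factor _ fun i hi hin hz ↦ ?_⟩⟩
  · obtain ⟨i, rfl⟩ := Nat.exists_eq_add_of_le' hi
    have := F.isGE_obj (n := n) hin
    have := (F.isGE_obj_and_isGE_shift_factor (n := n) hin).2
    have := F.isLE_shift_factor hi hin
    exact IsZero.of_full_of_faithful_of_isZero (shiftFunctor C (F.deg (i + 1))) _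
      (T.toTStructure.isZero _ (-F.deg (i + 1)) n)
  · have := F.isGE_shift_factor hi hin
    have hdeg : F.deg i ≤ -n := not_lt.1 fun hlt ↦ hz (h i hi hin hlt)
    exact T.toTStructure.ge_antitone (by lia) _ this.ge

lemma nonempty_iso_obj {i j : ℕ} (hij : i ≤ j) (hjn : j ≤ F.n)
    (h : ∀ l, i < l → l ≤ j → IsZero (F.factor l)) : Nonempty (F.obj i ≅ F.obj j) := by
  induction j, hij using Nat.le_induction with
  | base => exact ⟨Iso.refl _⟩
  | succ j hij ih =>
    obtain ⟨f, g, δ, hT⟩ := F.exists_triangle hjn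
    have hzero := (shiftFunctor C (F.deg (j + 1))).map_isZero (h (j + 1) (by lia) le_rfl)
    have : IsIso f := (Triangle.isZero₃_iff_isIso₁ _ hT).1 hzero
    obtain ⟨e⟩ := ih (by lia) fun l hil hlj ↦ h l hil (by lia)
    exact ⟨e ≪≫ asIso f⟩

lemma nonempty_shift_factor_iso {i : ℕ} (hi : 1 ≤ i) (hin : i ≤ F.n)
    (h : ∀ j, 1 ≤ j → j ≤ F.n → j ≠ i → IsZero (F.factor j)) :
    Nonempty ((F.factor i)⟦F.deg i⟧ ≅ M) := by
  obtain ⟨f, g, δ, hT⟩ := F.tri i hi hin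
  obtain ⟨e₀⟩ := F.nonempty_iso_obj (Nat.zero_le (i - 1)) (by lia)
    fun l hl hli ↦ h l hl (by lia) (by lia)
  obtain ⟨e₁⟩ := F.nonempty_iso_obj hin le_rfl fun l hil hln ↦ h l (by lia) hln (by lia)
  have : IsIso g := (Triangle.isZero₁_iff_isIso₂ _ hT).1 (F.zero.of_iso e₀.symm)
  exact ⟨(asIso g).symm ≪≫ e₁ ≪≫ F.top⟩

end

lemma factor_shift_of_mem_heart {X : C} (hX : X ∈ heart C T) {d : ℤ}
    (F : HeartFiltration C T (X⟦d⟧)) {i : ℕ} (hi : 1 ≤ i) (hin : i ≤ F.n) :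
    IsZero (F.factor i) ∨ F.deg i = d ∧ Nonempty (F.factor i ≅ X) := by
  obtain ⟨_, _⟩ := T.mem_heart_iff.1 hX
  have hlt := (F.isLE_iff (-d)).1 (T.toTStructure.isLE_shift X 0 d (-d))
  have hgt := (F.isGE_iff (-d)).1 (T.toTStructure.isGE_shift X 0 d (-d))
  have hne : ∀ j, 1 ≤ j → j ≤ F.n → F.deg j ≠ d → IsZero (F.factor j) := fun j hj hjn hdeg ↦
    hdeg.lt_or_gt.elim (fun h ↦ hlt j hj hjn (by lia)) (fun h ↦ hgt j hj hjn (by lia))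
  refine or_iff_not_imp_left.2 fun hz ↦ ?_
  have hd : F.deg i = d := not_not.1 fun h ↦ hz (hne i hi hin h)
  obtain ⟨e⟩ := F.nonempty_shift_factor_iso hi hin fun j hj hjn hji ↦ hne j hj hjn <| by
    rcases hji.lt_or_gt with h | h
    · exact (hd.symm.trans_lt (F.strict j i hj h hin)).ne'
    · exact ((F.strict i j hi h hjn).trans_eq hd).ne
  rw [hd] at e
  exact ⟨hd, ⟨(shiftFunctor C d).preimageIso e⟩⟩

/-- The filtration of a zero object of length `0`. -/
def ofIsZero (T : TStr C) {M : C} (hM : IsZero M) : HeartFiltration C T M where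
  n := 0
  obj _ := M
  deg _ := 0
  factor _ := M
  zero := hM
  top := Iso.refl M
  mem _ h₁ h₂ := by lia
  strict _ _ h₁ h₂ h₃ := by lia
  tri _ h₁ h₂ := by lia

/-- The extension of a filtration of `A` by one further factor `E`, in a degree `a` below those
of `A`, along a triangle `A → M → B → A[1]` with `B ≅ E[a]`. -/
noncomputable def snoc {A B E : C} (F : HeartFiltration C T A) (hE : E ∈ heart C T) {a : ℤ}
    (ha : ∀ i, 1 ≤ i → i ≤ F.n → a < F.deg i) (e : E⟦a⟧ ≅ B) {f : A ⟶ M} {g : M ⟶ B}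
    {δ : B ⟶ A⟦(1 : ℤ)⟧} (hT : Triangle.mk f g δ ∈ distTriang C) : HeartFiltration C T M where
  n := F.n + 1
  obj := Function.update F.obj (F.n + 1) M
  deg := Function.update F.deg (F.n + 1) a
  factor := Function.update F.factor (F.n + 1) E
  zero := by simpa using F.zero
  top := eqToIso (Function.update_self ..)
  mem i hi hin := by
    rcases hin.eq_or_lt with rfl | hlt
    · simpa using hE
    · simpa [hlt.ne] using F.mem i hi (by lia)
  strict i j hi hij hjn := by
    rcases hjn.eq_or_lt with rfl | hlt
    · simpa [hij.ne] using ha i hi (by lia)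
    · simpa [hlt.ne, (hij.trans hlt).ne] using F.strict i j hi hij (by lia)
  tri i hi hin := by
    rcases hin.eq_or_lt with rfl | hlt
    · rw [Function.update_self, Function.update_self, Function.update_self,
        Function.update_of_ne (by lia)]
      have hg : (g ≫ e.inv) ≫ e.hom = 𝟙 _ ≫ g := by simp
      have hδ : (e.hom ≫ δ ≫ F.top.inv⟦(1 : ℤ)⟧') ≫ F.top.hom⟦(1 : ℤ)⟧' = e.hom ≫ δ := by
        simp [← Functor.map_comp]
      exact ⟨F.top.hom ≫ f, g ≫ e.inv, e.hom ≫ δ ≫ F.top.inv⟦(1 : ℤ)⟧',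
        isomorphic_distinguished _ hT _ <|
          Triangle.isoMk _ _ F.top (Iso.refl _) e (comp_id _) hg hδ⟩
    · rw [Function.update_of_ne hlt.ne, Function.update_of_ne hlt.ne,
        Function.update_of_ne hlt.ne, Function.update_of_ne (by lia)]
      exact F.tri i hi (by lia)

lemma exists_neg_le_deg (l : ℕ) (n : ℤ) {M : C} [T.toTStructure.IsLE M n]
    [T.toTStructure.IsGE M (n + 1 - l)] :
    ∃ F : HeartFiltration C T M, ∀ i, 1 ≤ i → i ≤ F.n → -n ≤ F.deg i := by
  induction l generalizing n M with
  | zero =>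
    have : T.toTStructure.IsGE M (n + 1) := T.toTStructure.isGE_of_ge M _ (n + 1 - (0 : ℕ))
    exact ⟨ofIsZero T (T.toTStructure.isZero M n (n + 1)),
      fun i h₁ h₂ ↦ absurd (h₁.trans h₂) (by simp [ofIsZero])⟩
  | succ l ih =>
    obtain ⟨A, B, hA, hB, f, g, δ, hT⟩ :=
      T.toTStructure.exists_triangle M (n - 1) n (by lia)
    obtain ⟨_, _⟩ : T.toTStructure.IsLE A (n - 1) ∧ T.toTStructure.IsGE B n := ⟨⟨hA⟩, ⟨hB⟩⟩
    have hBn : T.toTStructure.IsLE B n := (isLE_obj₁_and_isLE_obj₃ T.toTStructure hT n n).2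
    have hAl : T.toTStructure.IsGE A (n + 1 - (l + 1 : ℕ)) :=
      (isGE_obj₁_and_isGE_obj₃ T.toTStructure hT n _).1
    have : T.toTStructure.IsGE A (n - 1 + 1 - l) :=
      T.toTStructure.isGE_of_ge _ _ (n + 1 - (l + 1 : ℕ))
    obtain ⟨F, hF⟩ := ih (n - 1) (M := A)
    have hE : B⟦n⟧ ∈ heart C T :=
      T.mem_heart_iff.2 ⟨T.toTStructure.isLE_shift B n n 0, T.toTStructure.isGE_shift B n n 0⟩
    refine ⟨F.snoc hE (fun i hi hin ↦ ?_) (shiftShiftNeg B n) hT, fun i hi hin ↦ ?_⟩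
    · have := hF i hi hin
      lia
    · rcases hin.eq_or_lt with rfl | hlt
      · simp [snoc]
      · have hdeg := hF i hi (Nat.lt_succ_iff.1 hlt)
        have hne : i ≠ F.n + 1 := hlt.ne
        simp only [snoc, Function.update_of_ne hne]
        lia

lemma nonempty (T : TStr C) (M : C) : Nonempty (HeartFiltration C T M) := by
  obtain ⟨n, _⟩ := T.exists_isLE M
  obtain ⟨m, _⟩ := T.exists_isGE M
  have : T.toTStructure.IsGE M (n + 1 - (n + 1 - m).toNat) :=
    T.toTStructure.isGE_of_ge _ _ m
  exact ⟨(exists_neg_le_deg (n + 1 - m).toNat n).choose⟩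

lemma isLE_sub_one_iff (d : ℤ) [T.toTStructure.IsLE M (-d)] :
    T.toTStructure.IsLE M (-d - 1) ↔ ∀ (F : HeartFiltration C T M) (i : ℕ),
      1 ≤ i → i ≤ F.n → F.deg i = d → IsZero (F.factor i) := by
  refine ⟨fun h F i hi hin hd ↦ (F.isLE_iff _).1 h i hi hin (by lia), fun h ↦ ?_⟩
  obtain ⟨F⟩ := nonempty T M
  refine (F.isLE_iff _).2 fun i hi hin hd ↦ ?_
  rcases eq_or_ne (F.deg i) d with hi_eq | hi_ne
  · exact h F i hi hin hi_eq
  · exact (F.isLE_iff (-d)).1 ‹_› i hi hin (by lia)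

lemma isGE_add_one_iff (d : ℤ) [T.toTStructure.IsGE M (-d)] :
    T.toTStructure.IsGE M (-d + 1) ↔ ∀ (F : HeartFiltration C T M) (i : ℕ),
      1 ≤ i → i ≤ F.n → F.deg i = d → IsZero (F.factor i) := by
  refine ⟨fun h F i hi hin hd ↦ (F.isGE_iff _).1 h i hi hin (by lia), fun h ↦ ?_⟩
  obtain ⟨F⟩ := nonempty T M
  refine (F.isGE_iff _).2 fun i hi hin hd ↦ ?_
  rcases eq_or_ne (F.deg i) d with hi_eq | hi_ne
  · exact h F i hi hin hi_eq
  · exact (F.isGE_iff (-d)).1 ‹_› i hi hin (by lia)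

end HeartFiltration

section Comparison

variable {T : TStr C} {t₀ : Triangulated.TStructure C}

lemma le_zero_le_of_heart {m : ℤ} (h : ∀ E ∈ heart C T, t₀.IsLE E m) :
    T.toTStructure.le 0 ≤ t₀.le m := by
  intro X (hX : T.toTStructure.le 0 X)
  obtain ⟨F⟩ := HeartFiltration.nonempty T X
  refine F.prop_of_factor _ fun i hi hin hz ↦ ?_
  have hdeg : 0 ≤ F.deg i := not_lt.1 fun hlt ↦ hz ((F.isLE_iff 0).1 ⟨hX⟩ i hi hin (by lia))
  have := h _ (F.mem i hi hin)
  have := t₀.isLE_shift (F.factor i) m (F.deg i) (m - F.deg i)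
  exact t₀.le_monotone (by lia) _ (t₀.le_of_isLE _ (m - F.deg i))

lemma ge_zero_le_of_heart {m : ℤ} (h : ∀ E ∈ heart C T, t₀.IsGE E m) :
    T.toTStructure.ge 0 ≤ t₀.ge m := by
  intro X (hX : T.toTStructure.ge 0 X)
  obtain ⟨F⟩ := HeartFiltration.nonempty T X
  refine F.prop_of_factor _ fun i hi hin hz ↦ ?_
  have hdeg : F.deg i ≤ 0 := not_lt.1 fun hlt ↦ hz ((F.isGE_iff 0).1 ⟨hX⟩ i hi hin (by lia))
  have := h _ (F.mem i hi hin)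
  have := t₀.isGE_shift (F.factor i) m (F.deg i) (m - F.deg i)
  exact t₀.ge_antitone (by lia) _ (t₀.ge_of_isGE _ (m - F.deg i))

end Comparison

section Tilt

variable {T T' : TStr C} {free tor : Set C} {t₀ : Triangulated.TStructure C} {m : ℤ}

section

variable (Q : ObjectProperty C) [Q.IsTriangulatedClosed₂] [Q.ContainsZero]
  [Q.IsClosedUnderIsomorphisms]

lemma prop_of_mem_tiltSharpSet (hfree : ∀ Y ∈ free, Q (Y⟦(1 : ℤ)⟧)) (htor : ∀ Y ∈ tor, Q Y)
    {E : C} (hE : E ∈ tiltSharpSet C T free tor) : Q E := by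
  obtain ⟨F⟩ := HeartFiltration.nonempty T E
  refine F.prop_of_factor Q fun i hi hin hz ↦ ?_
  obtain ⟨hd, hY⟩ | ⟨hd, hY⟩ := (hE F i hi hin).resolve_left hz
  · rw [hd]
    exact hfree _ hY
  · rw [hd]
    exact Q.prop_of_iso (shiftZero ℤ _).symm (htor _ hY)

lemma prop_of_mem_tiltFlatSet (hfree : ∀ Y ∈ free, Q Y) (htor : ∀ Y ∈ tor, Q (Y⟦(-1 : ℤ)⟧))
    {E : C} (hE : E ∈ tiltFlatSet C T free tor) : Q E := by
  obtain ⟨F⟩ := HeartFiltration.nonempty T E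
  refine F.prop_of_factor Q fun i hi hin hz ↦ ?_
  obtain ⟨hd, hY⟩ | ⟨hd, hY⟩ := (hE F i hi hin).resolve_left hz
  · rw [hd]
    exact Q.prop_of_iso (shiftZero ℤ _).symm (hfree _ hY)
  · rw [hd]
    exact htor _ hY

end

lemma shift_one_mem_tiltSharpSet (hfree : free ⊆ heart C T)
    (hiso : ∀ {X Y : C}, (X ≅ Y) → X ∈ free → Y ∈ free) {Y : C} (hY : Y ∈ free) :
    Y⟦(1 : ℤ)⟧ ∈ tiltSharpSet C T free tor := fun F _ hi hin ↦
  (HeartFiltration.factor_shift_of_mem_heart (hfree hY) F hi hin).imp_right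
    fun ⟨hd, ⟨e⟩⟩ ↦ .inl ⟨hd, hiso e.symm hY⟩

lemma shift_neg_one_mem_tiltFlatSet (htor : tor ⊆ heart C T)
    (hiso : ∀ {X Y : C}, (X ≅ Y) → X ∈ tor → Y ∈ tor) {Y : C} (hY : Y ∈ tor) :
    Y⟦(-1 : ℤ)⟧ ∈ tiltFlatSet C T free tor := fun F _ hi hin ↦
  (HeartFiltration.factor_shift_of_mem_heart (htor hY) F hi hin).imp_right
    fun ⟨hd, ⟨e⟩⟩ ↦ .inr ⟨hd, hiso e.symm hY⟩

lemma le_zero_le_of_heart_eq_tiltSharpSet (h : heart C T' = tiltSharpSet C T free tor)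
    (hfree : free ⊆ heart C T) (htor : tor ⊆ heart C T) :
    T'.toTStructure.le 0 ≤ T.toTStructure.le 0 := by
  refine le_zero_le_of_heart fun E hE ↦ ⟨prop_of_mem_tiltSharpSet _ (fun Y hY ↦ ?_)
    (fun Y hY ↦ (T.mem_heart_iff.1 (htor hY)).1.le) (h ▸ hE)⟩
  have := (T.mem_heart_iff.1 (hfree hY)).1
  have := T.toTStructure.isLE_shift Y 0 1 (-1)
  exact T.toTStructure.le_monotone (by lia) _ (T.toTStructure.le_of_isLE _ (-1))

lemma ge_zero_le_of_heart_eq_tiltFlatSet (h : heart C T' = tiltFlatSet C T free tor)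
    (hfree : free ⊆ heart C T) (htor : tor ⊆ heart C T) :
    T'.toTStructure.ge 0 ≤ T.toTStructure.ge 0 := by
  refine ge_zero_le_of_heart fun E hE ↦ ⟨prop_of_mem_tiltFlatSet _
    (fun Y hY ↦ (T.mem_heart_iff.1 (hfree hY)).2.ge) (fun Y hY ↦ ?_) (h ▸ hE)⟩
  have := (T.mem_heart_iff.1 (htor hY)).2
  have := T.toTStructure.isGE_shift Y 0 (-1) 1
  exact T.toTStructure.ge_antitone (by lia) _ (T.toTStructure.ge_of_isGE _ 1)

lemma ge_zero_le_iff_of_heart_eq_tiltSharpSet (h : heart C T' = tiltSharpSet C T free tor)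
    (hfree : free ⊆ heart C T) (htor : tor ⊆ heart C T)
    (hiso : ∀ {X Y : C}, (X ≅ Y) → X ∈ free → Y ∈ free)
    (h₀ : T.toTStructure.ge 0 ≤ t₀.ge m) :
    T'.toTStructure.ge 0 ≤ t₀.ge m ↔ ∀ Y ∈ free, t₀.IsGE Y (m + 1) := by
  refine ⟨fun hT' Y hY ↦ ?_, fun hY ↦ ge_zero_le_of_heart fun E hE ↦
    ⟨prop_of_mem_tiltSharpSet _ (fun Y hYf ↦ ?_) (fun Y hYt ↦ ?_) (h ▸ hE)⟩⟩
  · have hmem : Y⟦(1 : ℤ)⟧ ∈ heart C T' := h ▸ shift_one_mem_tiltSharpSet hfree hiso hY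
    have : t₀.IsGE (Y⟦(1 : ℤ)⟧) m := ⟨hT' _ (T'.mem_heart_iff.1 hmem).2.ge⟩
    exact t₀.isGE_of_shift Y (m + 1) 1 m
  · have := hY Y hYf
    exact (t₀.isGE_shift Y (m + 1) 1 m).ge
  · exact h₀ _ (T.mem_heart_iff.1 (htor hYt)).2.ge

lemma le_zero_le_iff_of_heart_eq_tiltFlatSet (h : heart C T' = tiltFlatSet C T free tor)
    (hfree : free ⊆ heart C T) (htor : tor ⊆ heart C T)
    (hiso : ∀ {X Y : C}, (X ≅ Y) → X ∈ tor → Y ∈ tor)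
    (h₀ : T.toTStructure.le 0 ≤ t₀.le m) :
    T'.toTStructure.le 0 ≤ t₀.le m ↔ ∀ Y ∈ tor, t₀.IsLE Y (m - 1) := by
  refine ⟨fun hT' Y hY ↦ ?_, fun hY ↦ le_zero_le_of_heart fun E hE ↦
    ⟨prop_of_mem_tiltFlatSet _ (fun Y hYf ↦ ?_) (fun Y hYt ↦ ?_) (h ▸ hE)⟩⟩
  · have hmem : Y⟦(-1 : ℤ)⟧ ∈ heart C T' := h ▸ shift_neg_one_mem_tiltFlatSet htor hiso hY
    have : t₀.IsLE (Y⟦(-1 : ℤ)⟧) m := ⟨hT' _ (T'.mem_heart_iff.1 hmem).1.le⟩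
    exact t₀.isLE_of_shift Y (m - 1) (-1) m
  · exact h₀ _ (T.mem_heart_iff.1 (hfree hYf)).1.le
  · have := hY Y hYt
    exact (t₀.isLE_shift Y (m - 1) (-1) m).le

end Tilt

section AddObj

variable [HasFiniteBiproducts C] {T : TStr C} {S : C}

section

omit [HasZeroObject C] [HasShift C ℤ] [∀ n : ℤ, (shiftFunctor C n).Additive] [Pretriangulated C]

lemma mem_addObj_self (S : C) : S ∈ addObj C S :=
  ⟨1, ⟨(biproductUniqueIso fun _ : Fin 1 ↦ S).symm⟩⟩

lemma mem_addObj_of_iso {X Y : C} (e : X ≅ Y) : X ∈ addObj C S → Y ∈ addObj C S :=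
  fun ⟨n, ⟨e'⟩⟩ ↦ ⟨n, ⟨e.symm ≪≫ e'⟩⟩

end

lemma isLE_of_mem_addObj (t : Triangulated.TStructure C) (n : ℤ) [t.IsLE S n] {Y : C}
    (hY : Y ∈ addObj C S) : t.IsLE Y n := by
  obtain ⟨r, ⟨e⟩⟩ := hY
  have : t.IsLE (⨁ fun _ : Fin r ↦ S) n :=
    (t.isLE_iff_orthogonal n (n + 1) rfl _).2 fun Z f hZ ↦
      biproduct.hom_ext' _ _ fun i ↦ by rw [comp_zero, t.zero (_ ≫ f) n (n + 1)]
  exact t.isLE_of_iso e.symm n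

lemma isGE_of_mem_addObj (t : Triangulated.TStructure C) (n : ℤ) [t.IsGE S n] {Y : C}
    (hY : Y ∈ addObj C S) : t.IsGE Y n := by
  obtain ⟨r, ⟨e⟩⟩ := hY
  have : t.IsGE (⨁ fun _ : Fin r ↦ S) n :=
    (t.isGE_iff_orthogonal (n - 1) n (by lia) _).2 fun Z f hZ ↦
      biproduct.hom_ext _ _ fun i ↦ by rw [zero_comp, t.zero (f ≫ _) (n - 1) n]
  exact t.isGE_of_iso e.symm n

lemma forall_mem_addObj_isLE_iff (t : Triangulated.TStructure C) (n : ℤ) :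
    (∀ Y ∈ addObj C S, t.IsLE Y n) ↔ t.IsLE S n :=
  ⟨fun h ↦ h S (mem_addObj_self S), fun _ _ hY ↦ isLE_of_mem_addObj t n hY⟩

lemma forall_mem_addObj_isGE_iff (t : Triangulated.TStructure C) (n : ℤ) :
    (∀ Y ∈ addObj C S, t.IsGE Y n) ↔ t.IsGE S n :=
  ⟨fun h ↦ h S (mem_addObj_self S), fun _ _ hY ↦ isGE_of_mem_addObj t n hY⟩

lemma addObj_subset_heart (hS : S ∈ heart C T) : addObj C S ⊆ heart C T := fun _ hY ↦
  have hS := T.mem_heart_iff.1 hS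
  T.mem_heart_iff.2 ⟨(forall_mem_addObj_isLE_iff _ 0).2 hS.1 _ hY,
    (forall_mem_addObj_isGE_iff _ 0).2 hS.2 _ hY⟩

end AddObj

section SimpleTilt

variable [HasFiniteBiproducts C] {T₀ T T' : TStr C} {a b : ℤ} {S : C}

lemma interval_iff_of_heart_eq_simpleFlatSet
    (hT : T.P ⊆ shiftSet C T₀.P a ∧ shiftSet C T₀.P b ⊆ T.P) (hS : S ∈ heart C T)
    (hflat : heart C T' = simpleFlatSet C T S) :
    (T'.P ⊆ shiftSet C T₀.P a ∧ shiftSet C T₀.P b ⊆ T'.P) ↔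
      ∀ (F : HeartFiltration C T₀ S) (i : ℕ), 1 ≤ i → i ≤ F.n →
        F.deg i = a → IsZero (F.factor i) := by
  rw [T.subset_shiftSet_iff, T.shiftSet_subset_iff] at hT
  rw [T'.subset_shiftSet_iff, T'.shiftSet_subset_iff]
  have hadd := addObj_subset_heart hS
  have hge : T'.toTStructure.ge 0 ≤ T₀.toTStructure.ge (-b) :=
    (ge_zero_le_of_heart_eq_tiltFlatSet hflat (Set.sep_subset _ _) hadd).trans hT.2
  have : T₀.toTStructure.IsLE S (-a) := ⟨hT.1 _ (T.mem_heart_iff.1 hS).1.le⟩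
  rw [and_iff_left hge, le_zero_le_iff_of_heart_eq_tiltFlatSet hflat (Set.sep_subset _ _) hadd
    mem_addObj_of_iso hT.1, forall_mem_addObj_isLE_iff, HeartFiltration.isLE_sub_one_iff]

lemma interval_iff_of_heart_eq_simpleSharpSet
    (hT : T.P ⊆ shiftSet C T₀.P a ∧ shiftSet C T₀.P b ⊆ T.P) (hS : S ∈ heart C T)
    (hsharp : heart C T' = simpleSharpSet C T S) :
    (T'.P ⊆ shiftSet C T₀.P a ∧ shiftSet C T₀.P b ⊆ T'.P) ↔
      ∀ (F : HeartFiltration C T₀ S) (i : ℕ), 1 ≤ i → i ≤ F.n →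
        F.deg i = b → IsZero (F.factor i) := by
  rw [T.subset_shiftSet_iff, T.shiftSet_subset_iff] at hT
  rw [T'.subset_shiftSet_iff, T'.shiftSet_subset_iff]
  have hadd := addObj_subset_heart hS
  have hle : T'.toTStructure.le 0 ≤ T₀.toTStructure.le (-a) :=
    (le_zero_le_of_heart_eq_tiltSharpSet hsharp hadd (Set.sep_subset _ _)).trans hT.1
  have : T₀.toTStructure.IsGE S (-b) := ⟨hT.2 _ (T.mem_heart_iff.1 hS).2.ge⟩
  rw [and_iff_right hle, ge_zero_le_iff_of_heart_eq_tiltSharpSet hsharp hadd (Set.sep_subset _ _)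
    mem_addObj_of_iso hT.2, forall_mem_addObj_isGE_iff, HeartFiltration.isGE_add_one_iff]

end SimpleTilt

end

theorem statement_12_general [HasFiniteBiproducts C] (T₀ T : TStr C) (a b : ℤ)
    (hT : T.P ⊆ shiftSet C T₀.P a ∧ shiftSet C T₀.P b ⊆ T.P) (S : C) (hS : S ∈ heart C T)
    (Tsharp Tflat : TStr C) (hsharp : heart C Tsharp = simpleSharpSet C T S)
    (hflat : heart C Tflat = simpleFlatSet C T S) :
    ((Tflat.P ⊆ shiftSet C T₀.P a ∧ shiftSet C T₀.P b ⊆ Tflat.P) ↔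
      ∀ (F : HeartFiltration C T₀ S) (i : ℕ), 1 ≤ i → i ≤ F.n →
        F.deg i = a → IsZero (F.factor i)) ∧
    ((Tsharp.P ⊆ shiftSet C T₀.P a ∧ shiftSet C T₀.P b ⊆ Tsharp.P) ↔
      ∀ (F : HeartFiltration C T₀ S) (i : ℕ), 1 ≤ i → i ≤ F.n →
        F.deg i = b → IsZero (F.factor i)) :=
  ⟨interval_iff_of_heart_eq_simpleFlatSet hT hS hflat,
    interval_iff_of_heart_eq_simpleSharpSet hT hS hsharp⟩

/-- Let `H0`, `H` be finite hearts with `H0[1] ≤ H ≤ H0[N-1]`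
(`N ≥ 2`) and `S` a rigid simple of `H`. With homology taken with respect to `H0`:
(1) `H0[1] ≤ H^♭_S ≤ H0[N-1]` iff `H¹(S) = 0`;
(2) `H0[1] ≤ H^♯_S ≤ H0[N-1]` iff `H^{N-1}(S) = 0`. -/
theorem statement_12 (k : Type*) [Field k] [IsAlgClosed k] [Linear k C]
    [∀ X Y : C, FiniteDimensional k (X ⟶ Y)] [HasFiniteBiproducts C]
    (T0 T : TStr C) (hfin0 : FiniteHeart C T0) (hfin : FiniteHeart C T)
    (N : ℤ) (hN : 2 ≤ N)
    (hint : T.P ⊆ shiftSet C T0.P 1 ∧ shiftSet C T0.P (N - 1) ⊆ T.P)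
    (S : C) (hS : IsSimpleIn C (heart C T) S)
    (hrigid : ∀ f : S ⟶ S⟦(1 : ℤ)⟧, f = 0)
    (Tsharp Tflat : TStr C)
    (hsh : heart C Tsharp = simpleSharpSet C T S)
    (hfl : heart C Tflat = simpleFlatSet C T S) :
    ((Tflat.P ⊆ shiftSet C T0.P 1 ∧ shiftSet C T0.P (N - 1) ⊆ Tflat.P) ↔
      ∀ (F : HeartFiltration C T0 S) (i : ℕ), 1 ≤ i → i ≤ F.n →
        F.deg i = 1 → IsZero (F.factor i)) ∧
    ((Tsharp.P ⊆ shiftSet C T0.P 1 ∧ shiftSet C T0.P (N - 1) ⊆ Tsharp.P) ↔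
      ∀ (F : HeartFiltration C T0 S) (i : ℕ), 1 ≤ i → i ≤ F.n →
        F.deg i = N - 1 → IsZero (F.factor i)) :=
  statement_12_general C T0 T 1 (N - 1) hint S hS.1 Tsharp Tflat hsh hfl

end Paper
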